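/- arXiv:2509.25209 — 4 statements merged into one kernel-verified Lean document; each statement's English description precedes it below -/
import Mathlib

section
/- For the quantity of interest Γ(f) = max[f] = max_{x∈X} f(x), every recovery map Δ : ℝ^M → ℝ satisfies gwce_ε(Δ) ≥ (1/2) max_{x∈X} u_{0,ε}(x) + (1/2) min_{1≤m≤M} ε_m, where u_{0,ε}(x) = min_{1≤m≤M}(ε_m + dist(x,x⁽ᵐ⁾)^α). -/
open scoped ENNReal

/-!
The data `y = 0` cannot distinguish `f = u_{0,ε}` from the constant `g = -min_m ε_m`: the former
is a minimum of α-Hölder functions with `0 ≤ u_{0,ε}(x⁽ᵐ⁾) ≤ ε_m`. Whatever value `Δ 0` takes, it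
misses one of `max[f]` and `max[g]` by at least half of
`max[f] - max[g] = max_x u_{0,ε}(x) + min_m ε_m`.
-/

/-- The model class `H_α` of functions that are `α`-Hölder with constant `1`, written with real
powers of the real distance so that `α` stays a real number. -/
def holderClass (X : Type*) [PseudoMetricSpace X] (α : ℝ) : Set (X → ℝ) :=
  {f | ∀ x x' : X, |f x - f x'| ≤ dist x x' ^ α}

/-- The global worst-case error `gwce_ε(Δ)` of a recovery map `Δ` for the quantity of interest `Γ`
over the model class `H`, from point values at the datasites `xs` known up to the accuracies `ε`.
It is `∞` when the errors are unbounded. -/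
noncomputable def globalWorstCaseError {X ι : Type*} (H : Set (X → ℝ)) (Γ : (X → ℝ) → ℝ)
    (xs : ι → X) (ε : ι → ℝ) (Δ : (ι → ℝ) → ℝ) : ℝ≥0∞ :=
  ⨆ (f : X → ℝ) (_ : f ∈ H) (y : ι → ℝ) (_ : ∀ m, |y m - f (xs m)| ≤ ε m),
    ENNReal.ofReal |Γ f - Δ y|

/-- The upper envelope `x ↦ inf_m (c_m + dist(x, x⁽ᵐ⁾)^α)`. For `c = y + ε` it is the function
`u_{y,ε}`, so `u_{0,ε}` is the case `c = ε`. -/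
noncomputable def upperEnvelope {X ι : Type*} [PseudoMetricSpace X] (α : ℝ) (xs : ι → X)
    (c : ι → ℝ) (x : X) : ℝ :=
  ⨅ m, (c m + dist x (xs m) ^ α)

section WorstCaseError

variable {X ι : Type*} {H : Set (X → ℝ)} {Γ : (X → ℝ) → ℝ} {xs : ι → X} {ε : ι → ℝ}
  {Δ : (ι → ℝ) → ℝ} {f g : X → ℝ} {y : ι → ℝ}

theorem ofReal_abs_sub_le_globalWorstCaseError (hf : f ∈ H)
    (hy : ∀ m, |y m - f (xs m)| ≤ ε m) :
    ENNReal.ofReal |Γ f - Δ y| ≤ globalWorstCaseError H Γ xs ε Δ :=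
  le_iSup₂_of_le f hf <| le_iSup₂_of_le y hy le_rfl

theorem ofReal_half_sub_le_globalWorstCaseError (hf : f ∈ H) (hg : g ∈ H)
    (hyf : ∀ m, |y m - f (xs m)| ≤ ε m) (hyg : ∀ m, |y m - g (xs m)| ≤ ε m) :
    ENNReal.ofReal ((Γ f - Γ g) / 2) ≤ globalWorstCaseError H Γ xs ε Δ := by
  have half_le_max : (Γ f - Γ g) / 2 ≤ max |Γ f - Δ y| |Γ g - Δ y| := by
    linarith [le_max_left |Γ f - Δ y| |Γ g - Δ y|, le_max_right |Γ f - Δ y| |Γ g - Δ y|,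
      le_abs_self (Γ f - Δ y), neg_abs_le (Γ g - Δ y)]
  calc ENNReal.ofReal ((Γ f - Γ g) / 2)
      ≤ ENNReal.ofReal (max |Γ f - Δ y| |Γ g - Δ y|) := ENNReal.ofReal_le_ofReal half_le_max
    _ = max (ENNReal.ofReal |Γ f - Δ y|) (ENNReal.ofReal |Γ g - Δ y|) := ENNReal.ofReal_max _ _
    _ ≤ globalWorstCaseError H Γ xs ε Δ :=
      max_le (ofReal_abs_sub_le_globalWorstCaseError hf hyf)
        (ofReal_abs_sub_le_globalWorstCaseError hg hyg)

end WorstCaseError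

section HolderClass

variable {X ι : Type*} [PseudoMetricSpace X] {α : ℝ}

theorem dist_rpow_triangle (hα : 0 ≤ α) (hα1 : α ≤ 1) (x y z : X) :
    dist x z ^ α ≤ dist x y ^ α + dist y z ^ α :=
  (Real.rpow_le_rpow dist_nonneg (dist_triangle x y z) hα).trans
    (Real.rpow_add_le_add_rpow dist_nonneg dist_nonneg hα hα1)

theorem mem_holderClass_of_le_add {f : X → ℝ} (hf : ∀ x x', f x ≤ f x' + dist x x' ^ α) :
    f ∈ holderClass X α := by
  intro x x'
  rw [abs_sub_le_iff, sub_le_iff_le_add', sub_le_iff_le_add']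
  exact ⟨hf x x', dist_comm x x' ▸ hf x' x⟩

theorem const_mem_holderClass (a : ℝ) : (fun _ ↦ a) ∈ holderClass X α :=
  mem_holderClass_of_le_add fun _ _ ↦ le_add_of_nonneg_right (Real.rpow_nonneg dist_nonneg α)

variable {xs : ι → X} {c : ι → ℝ}

theorem bddBelow_range_add_dist_rpow (hc : BddBelow (Set.range c)) (x : X) :
    BddBelow (Set.range fun m ↦ c m + dist x (xs m) ^ α) :=
  hc.range_mono _ fun _ ↦ le_add_of_nonneg_right (Real.rpow_nonneg dist_nonneg α)

theorem upperEnvelope_apply_le (hα : α ≠ 0) (hc : BddBelow (Set.range c)) (m : ι) :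
    upperEnvelope α xs c (xs m) ≤ c m :=
  calc upperEnvelope α xs c (xs m)
      ≤ c m + dist (xs m) (xs m) ^ α := ciInf_le (bddBelow_range_add_dist_rpow hc (xs m)) m
    _ = c m := by rw [dist_self, Real.zero_rpow hα, add_zero]

theorem upperEnvelope_nonneg (hc : ∀ m, 0 ≤ c m) (x : X) : 0 ≤ upperEnvelope α xs c x :=
  Real.iInf_nonneg fun m ↦ add_nonneg (hc m) (Real.rpow_nonneg dist_nonneg α)

theorem upperEnvelope_mem_holderClass [Nonempty ι] (hα : 0 ≤ α) (hα1 : α ≤ 1)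
    (hc : BddBelow (Set.range c)) : upperEnvelope α xs c ∈ holderClass X α := by
  refine mem_holderClass_of_le_add fun x x' ↦ sub_le_iff_le_add.mp <| le_ciInf fun m ↦ ?_
  rw [sub_le_iff_le_add]
  calc upperEnvelope α xs c x
      ≤ c m + dist x (xs m) ^ α := ciInf_le (bddBelow_range_add_dist_rpow hc x) m
    _ ≤ c m + dist x' (xs m) ^ α + dist x x' ^ α := by
      linarith [dist_rpow_triangle hα hα1 x x' (xs m)]

end HolderClass

theorem stmt10_general {X ι : Type*} [PseudoMetricSpace X] [BoundedSpace X] [Nonempty ι]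
    {α : ℝ} (hα : 0 < α) (hα1 : α ≤ 1) (xs : ι → X) {ε : ι → ℝ} (hε : ∀ m, 0 ≤ ε m)
    (Δ : (ι → ℝ) → ℝ) :
    ENNReal.ofReal ((1 / 2) * (⨆ x, upperEnvelope α xs ε x) + (1 / 2) * ⨅ m, ε m) ≤
      globalWorstCaseError (holderClass X α) (fun f ↦ ⨆ x, f x) xs ε Δ := by
  have : Nonempty X := .map xs inferInstance
  have bdd : BddBelow (Set.range ε) := ⟨0, Set.forall_mem_range.mpr hε⟩
  have zero_near_envelope (m : ι) : |0 - upperEnvelope α xs ε (xs m)| ≤ ε m := by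
    rw [zero_sub, abs_neg, abs_of_nonneg (upperEnvelope_nonneg hε (xs m))]
    exact upperEnvelope_apply_le hα.ne' bdd m
  have zero_near_const (m : ι) : |0 - -⨅ k, ε k| ≤ ε m := by
    rw [zero_sub, neg_neg, abs_of_nonneg (Real.iInf_nonneg hε)]
    exact ciInf_le bdd m
  convert ofReal_half_sub_le_globalWorstCaseError (Γ := fun f ↦ ⨆ x, f x) (y := 0)
    (upperEnvelope_mem_holderClass hα.le hα1 bdd) (const_mem_holderClass (-⨅ m, ε m))
    zero_near_envelope zero_near_const using 2
  rw [ciSup_const]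
  ring

/-- For the quantity of interest `max[f] = max_{x ∈ X} f(x)`, every recovery map
`Δ : ℝ^M → ℝ` satisfies `gwce_ε(Δ) ≥ (1/2) max_{x} u_{0,ε}(x) + (1/2) min_m ε_m`. -/
theorem stmt10 {X : Type*} [MetricSpace X] [CompactSpace X] [Nonempty X]
    (α : ℝ) (hα : 0 < α) (hα1 : α ≤ 1)
    (M : ℕ) (hM : 0 < M) (xs : Fin M → X) (ε : Fin M → ℝ) (hε : ∀ m, 0 ≤ ε m)
    (gwce : ((Fin M → ℝ) → ℝ) → ℝ≥0∞)
    (hgwce : ∀ Δ : (Fin M → ℝ) → ℝ, gwce Δ =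
      ⨆ (f : X → ℝ) (_ : ∀ x x' : X, |f x - f x'| ≤ dist x x' ^ α)
        (y : Fin M → ℝ) (_ : ∀ m, |y m - f (xs m)| ≤ ε m),
        ENNReal.ofReal |(⨆ x : X, f x) - Δ y|)
    (Δ : (Fin M → ℝ) → ℝ) :
    ENNReal.ofReal ((1 / 2) * (⨆ x : X, ⨅ m : Fin M, (ε m + dist x (xs m) ^ α)) +
      (1 / 2) * ⨅ m : Fin M, ε m) ≤ gwce Δ := by
  have : Nonempty (Fin M) := ⟨⟨0, hM⟩⟩
  exact (stmt10_general hα hα1 xs hε Δ).trans_eq (hgwce Δ).symm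
end

section
/- Let ‖·‖ be a norm on ℝ^d, let X = B(0,1) be its closed unit ball, and let μ be Lebesgue measure on X normalized so that μ(X) = 1. Then for any α ∈ (0,1], any M ≥ 1, and any points x⁽¹⁾,…,x⁽ᴹ⁾ ∈ X, one has ∫_X min_{1≤m≤M} ‖x − x⁽ᵐ⁾‖^α dμ(x) ≥ (d/(d+α)) · M^{−α/d}. -/
open MeasureTheory

/-!
Let `ν` be a probability measure with `ν (ball x r) ≤ C r ^ d`. The sublevel set `{U < t}` of
`U x = min_m dist x x⁽ᵐ⁾ ^ α` is the union of the `M` balls of radius `t ^ (1 / α)`, so its measure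
is at most `M C t ^ (d / α) = (t / T) ^ (d / α)` with `T = (M C) ^ (-α / d)`. By the layer-cake
formula `∫ U ≥ ∫₀ᵀ (1 - (t / T) ^ (d / α)) dt = d / (d + α) * T`. The normalized Lebesgue measure on
the unit ball of a norm satisfies the hypothesis with `C = 1`.
-/

open Metric Set Module
open scoped ProbabilityTheory

section PowerTail

lemma integral_one_sub_div_rpow {T q : ℝ} (hT : 0 < T) (hq : -1 < q) :
    ∫ t in (0 : ℝ)..T, (1 - (t / T) ^ q) = q / (q + 1) * T := by
  have hq' : q + 1 ≠ 0 := (neg_lt_iff_pos_add.1 hq).ne'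
  have hint : IntervalIntegrable (fun s : ℝ ↦ s ^ q) volume 0 1 :=
    intervalIntegral.intervalIntegrable_rpow' hq
  calc ∫ t in (0 : ℝ)..T, (1 - (t / T) ^ q)
      = T * ∫ s in (0 : ℝ)..1, (1 - s ^ q) := by
        rw [intervalIntegral.integral_comp_div (fun s ↦ 1 - s ^ q) hT.ne', zero_div,
          div_self hT.ne', smul_eq_mul]
    _ = T * (1 - 1 / (q + 1)) := by
        rw [intervalIntegral.integral_sub intervalIntegrable_const hint,
          intervalIntegral.integral_const, integral_rpow (Or.inl hq),
          Real.one_rpow, Real.zero_rpow hq', sub_zero, one_smul]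
    _ = q / (q + 1) * T := by
        field_simp
        ring

variable {Ω : Type*} [MeasurableSpace Ω] {ν : Measure Ω} {f : Ω → ℝ}

lemma intervalIntegral_measureReal_le_le_integral [IsFiniteMeasure ν] (hf : Integrable f ν)
    (hf_nonneg : 0 ≤ f) {T : ℝ} (hT : 0 ≤ T) :
    ∫ t in (0 : ℝ)..T, ν.real {ω | t ≤ f ω} ≤ ∫ ω, f ω ∂ν := by
  have hmin : Integrable (fun ω ↦ min (f ω) T) ν := hf.inf (integrable_const T)
  calc ∫ t in (0 : ℝ)..T, ν.real {ω | t ≤ f ω}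
      = ∫ t in Ioc 0 T, ν.real {ω | t ≤ min (f ω) T} := by
        rw [intervalIntegral.integral_of_le hT]
        refine setIntegral_congr_fun measurableSet_Ioc fun t ht ↦ ?_
        simp only [le_min_iff, ht.2, and_true]
    _ = ∫ ω, min (f ω) T ∂ν :=
        (hmin.integral_eq_integral_Ioc_meas_le
          (.of_forall fun ω ↦ le_min (hf_nonneg ω) hT) (.of_forall fun ω ↦ min_le_right _ _)).symm
    _ ≤ ∫ ω, f ω ∂ν := integral_mono hmin hf fun ω ↦ min_le_left _ _

theorem le_integral_of_measureReal_lt_le_rpow [IsProbabilityMeasure ν] (hf : Integrable f ν)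
    (hf_nonneg : 0 ≤ f) {T q : ℝ} (hT : 0 < T) (hq : 0 < q)
    (htail : ∀ t ∈ Icc 0 T, ν.real {ω | f ω < t} ≤ (t / T) ^ q) :
    q / (q + 1) * T ≤ ∫ ω, f ω ∂ν := by
  have hcompl (t : ℝ) : 1 ≤ ν.real {ω | f ω < t} + ν.real {ω | t ≤ f ω} := by
    rw [← probReal_univ (μ := ν)]
    exact (measureReal_mono fun ω _ ↦ lt_or_ge (f ω) t).trans (measureReal_union_le _ _)
  have hanti : Antitone fun t : ℝ ↦ ν.real {ω | t ≤ f ω} :=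
    fun _ _ hst ↦ measureReal_mono fun _ ↦ hst.trans
  have hcont : Continuous fun t : ℝ ↦ 1 - (t / T) ^ q :=
    continuous_const.sub ((continuous_id.div_const T).rpow_const fun _ ↦ Or.inr hq.le)
  calc q / (q + 1) * T = ∫ t in (0 : ℝ)..T, (1 - (t / T) ^ q) :=
        (integral_one_sub_div_rpow hT (by linarith)).symm
    _ ≤ ∫ t in (0 : ℝ)..T, ν.real {ω | t ≤ f ω} :=
        intervalIntegral.integral_mono_on hT.le (hcont.intervalIntegrable 0 T)
          hanti.intervalIntegrable fun t ht ↦ by linarith [hcompl t, htail t ht]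
    _ ≤ ∫ ω, f ω ∂ν := intervalIntegral_measureReal_le_le_integral hf hf_nonneg hT.le

end PowerTail

section MetricSpace

variable {X ι : Type*} [PseudoMetricSpace X] {α : ℝ} {c : ι → X}

lemma bddBelow_range_dist_rpow (α : ℝ) (c : ι → X) (x : X) :
    BddBelow (range fun i ↦ dist x (c i) ^ α) :=
  ⟨0, forall_mem_range.2 fun _ ↦ by positivity⟩

lemma setOf_iInf_dist_rpow_lt [Nonempty ι] (hα : 0 < α) {t : ℝ} (ht : 0 ≤ t) :
    {x | ⨅ i, dist x (c i) ^ α < t} = ⋃ i, ball (c i) (t ^ α⁻¹) := by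
  ext x
  simp only [mem_ofPred_eq, ciInf_lt_iff (bddBelow_range_dist_rpow α c x), mem_iUnion, mem_ball,
    Real.lt_rpow_inv_iff_of_pos dist_nonneg ht hα]

variable [MeasurableSpace X] {ν : Measure X}

lemma integrable_iInf_dist_rpow [OpensMeasurableSpace X] [IsFiniteMeasure ν] [Countable ι]
    [Nonempty ι] (hα : 0 ≤ α) {A : Set X} (hA : Bornology.IsBounded A) (hνA : ∀ᵐ x ∂ν, x ∈ A) :
    Integrable (fun x ↦ ⨅ i, dist x (c i) ^ α) ν := by
  have hmeas : Measurable fun x ↦ ⨅ i, dist x (c i) ^ α :=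
    .iInf fun i ↦ (continuous_id.dist continuous_const).measurable.pow_const α
  obtain ⟨i₀⟩ := ‹Nonempty ι›
  obtain ⟨R, hR⟩ := hA.subset_closedBall (c i₀)
  refine .of_bound hmeas.aestronglyMeasurable (R ^ α) (hνA.mono fun x hx ↦ ?_)
  rw [Real.norm_of_nonneg (Real.iInf_nonneg fun i ↦ by positivity)]
  exact (ciInf_le (bddBelow_range_dist_rpow α c x) i₀).trans
    (Real.rpow_le_rpow dist_nonneg (hR hx) hα)

lemma measureReal_iInf_dist_rpow_lt_le [Fintype ι] [Nonempty ι] {C d t : ℝ} (hα : 0 < α)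
    (hball : ∀ i, ∀ r ≥ 0, ν.real (ball (c i) r) ≤ C * r ^ d) (ht : 0 ≤ t) :
    ν.real {x | ⨅ i, dist x (c i) ^ α < t} ≤ Fintype.card ι * C * t ^ (d / α) :=
  calc ν.real {x | ⨅ i, dist x (c i) ^ α < t}
      ≤ ∑ i, ν.real (ball (c i) (t ^ α⁻¹)) := by
        rw [setOf_iInf_dist_rpow_lt hα ht]
        exact measureReal_iUnion_fintype_le _
    _ ≤ ∑ _i : ι, C * (t ^ α⁻¹) ^ d :=
        Finset.sum_le_sum fun i _ ↦ hball i _ (by positivity)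
    _ = Fintype.card ι * C * t ^ (d / α) := by
        rw [Finset.sum_const, Finset.card_univ, nsmul_eq_mul, ← mul_assoc, ← Real.rpow_mul ht,
          inv_mul_eq_div]

theorem le_integral_iInf_dist_rpow [IsProbabilityMeasure ν] [Fintype ι] [Nonempty ι]
    {C d : ℝ} (hC : 0 < C) (hd : 0 < d) (hα : 0 < α)
    (hball : ∀ i, ∀ r ≥ 0, ν.real (ball (c i) r) ≤ C * r ^ d)
    (hint : Integrable (fun x ↦ ⨅ i, dist x (c i) ^ α) ν) :
    d / (d + α) * (Fintype.card ι * C) ^ (-(α / d)) ≤ ∫ x, ⨅ i, dist x (c i) ^ α ∂ν := by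
  set K : ℝ := Fintype.card ι * C
  have hK : 0 < K := by positivity
  have hrescale (t : ℝ) (ht : 0 ≤ t) :
      K * t ^ (d / α) = (t / K ^ (-(α / d))) ^ (d / α) := by
    rw [Real.div_rpow ht (by positivity), ← Real.rpow_mul hK.le, neg_mul,
      div_mul_div_cancel₀ hd.ne', div_self hα.ne', Real.rpow_neg_one, div_inv_eq_mul, mul_comm]
  have hconst : d / α / (d / α + 1) = d / (d + α) := by field_simp
  rw [← hconst]
  exact le_integral_of_measureReal_lt_le_rpow hint
    (fun x ↦ Real.iInf_nonneg fun i ↦ by positivity) (by positivity) (by positivity)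
    fun t ht ↦ (measureReal_iInf_dist_rpow_lt_le hα hball ht.1).trans_eq (hrescale t ht.1)

end MetricSpace

lemma measureReal_cond_le {Ω : Type*} [MeasurableSpace Ω] {μ : Measure Ω} (s : Set Ω) {t : Set Ω}
    (ht : μ t ≠ ⊤) : μ[|s].real t ≤ μ.real t / μ.real s := by
  rw [ProbabilityTheory.cond, measureReal_ennreal_smul_apply, ENNReal.toReal_inv,
    inv_mul_eq_div]
  exact div_le_div_of_nonneg_right
    (ENNReal.toReal_mono ht (Measure.restrict_apply_le s t)) measureReal_nonneg

theorem le_integral_cond_iInf_dist_rpow {E ι : Type*} [NormedAddCommGroup E] [NormedSpace ℝ E]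
    [FiniteDimensional ℝ E] [Nontrivial E] [MeasurableSpace E] [BorelSpace E] (μ : Measure E)
    [μ.IsAddHaarMeasure] [Fintype ι] [Nonempty ι] {A : Set E} (hA : MeasurableSet A)
    (hA_bdd : Bornology.IsBounded A) (hA_ne : μ A ≠ 0) {α : ℝ} (hα : 0 < α) (c : ι → E) :
    finrank ℝ E / (finrank ℝ E + α) *
        (Fintype.card ι * (μ.real (closedBall 0 1) / μ.real A)) ^ (-(α / finrank ℝ E)) ≤
      ∫ x, ⨅ i, dist x (c i) ^ α ∂μ[|A] := by
  have hA_top : μ A ≠ ⊤ := hA_bdd.measure_lt_top.ne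
  have : IsProbabilityMeasure μ[|A] :=
    ProbabilityTheory.cond_isProbabilityMeasure_of_finite hA_ne hA_top
  have hA_pos : 0 < μ.real A := ENNReal.toReal_pos hA_ne hA_top
  have hB_pos : 0 < μ.real (closedBall (0 : E) 1) :=
    ENNReal.toReal_pos (measure_closedBall_pos μ 0 one_pos).ne' measure_closedBall_lt_top.ne
  have hball (i : ι) (r : ℝ) (hr : r ≥ 0) :
      μ[|A].real (ball (c i) r) ≤ μ.real (closedBall 0 1) / μ.real A * r ^ (finrank ℝ E : ℝ) := by
    calc μ[|A].real (ball (c i) r)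
        ≤ μ[|A].real (closedBall (c i) r) := measureReal_mono ball_subset_closedBall
      _ ≤ μ.real (closedBall (c i) r) / μ.real A :=
          measureReal_cond_le A measure_closedBall_lt_top.ne
      _ = μ.real (closedBall 0 1) / μ.real A * r ^ (finrank ℝ E : ℝ) := by
          rw [μ.addHaar_real_closedBall' (c i) hr, Real.rpow_natCast]
          ring
  exact le_integral_iInf_dist_rpow (by positivity) (Nat.cast_pos.2 finrank_pos) hα hball
    (integrable_iInf_dist_rpow hα.le hA_bdd (ProbabilityTheory.ae_cond_mem hA))

section Seminorm

variable {E : Type*} [AddCommGroup E] [Module ℝ E] [FiniteDimensional ℝ E]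

lemma topology_ofCore_eq_moduleTopology [Norm E] (core : NormedSpace.Core ℝ E) :
    (PseudoMetricSpace.ofSeminormedSpaceCore core.toCore).toUniformSpace.toTopologicalSpace =
      moduleTopology ℝ E := by
  let : NormedAddCommGroup E := .ofCore core
  let : NormedSpace ℝ E := .ofCore core
  exact isModuleTopologyOfFiniteDimensional.eq_moduleTopology'

theorem stmt15_general [TopologicalSpace E] [IsTopologicalAddGroup E] [ContinuousSMul ℝ E]
    [T2Space E] [Nontrivial E] [MeasurableSpace E] [BorelSpace E] (μ : Measure E)
    [μ.IsAddHaarMeasure] (p : Seminorm ℝ E) (hp : ∀ x, p x = 0 → x = 0) {α : ℝ} (hα : 0 < α)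
    {M : ℕ} (hM : 0 < M) (xs : Fin M → E) :
    finrank ℝ E / (finrank ℝ E + α) * (M : ℝ) ^ (-(α / finrank ℝ E)) ≤
      ∫ x, ⨅ m, p (x - xs m) ^ α ∂μ[|{x | p x ≤ 1}] := by
  let : Norm E := ⟨p⟩
  have core : NormedSpace.Core ℝ E :=
    { norm_nonneg := apply_nonneg p
      norm_smul := map_smul_eq_mul p
      norm_triangle := map_add_le_add p
      norm_eq_zero_iff := fun x ↦ ⟨hp x, fun h ↦ h ▸ map_zero p⟩ }
  -- A finite-dimensional space has only one Hausdorff vector space topology, so `p` becomes a norm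
  -- inducing the given one.
  let : NormedAddCommGroup E := .ofCoreReplaceTopology core <|
    isModuleTopologyOfFiniteDimensional.eq_moduleTopology'.trans
      (topology_ofCore_eq_moduleTopology core).symm
  let : NormedSpace ℝ E := .ofCore core
  have : Nonempty (Fin M) := ⟨0, hM⟩
  have hX : closedBall (0 : E) 1 = {x | p x ≤ 1} := by
    ext x
    exact mem_closedBall_zero_iff
  have hX_ne : μ (closedBall (0 : E) 1) ≠ 0 := (measure_closedBall_pos μ 0 one_pos).ne'
  have hX_real : μ.real (closedBall (0 : E) 1) ≠ 0 :=
    (ENNReal.toReal_pos hX_ne measure_closedBall_lt_top.ne).ne'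
  have h := le_integral_cond_iInf_dist_rpow μ isClosed_closedBall.measurableSet
    isBounded_closedBall hX_ne hα xs
  simp only [Fintype.card_fin, div_self hX_real, mul_one, dist_eq_norm] at h
  rwa [hX] at h

end Seminorm

/-- For an arbitrary norm `N` on `ℝ^d` with unit ball `X = {N ≤ 1}` carrying the
normalized Lebesgue measure, and any datasites `x⁽¹⁾, …, x⁽ᴹ⁾ ∈ X`,
`∫_X min_m N(x - x⁽ᵐ⁾)^α dμ(x) ≥ (d/(d+α)) M^(-α/d)`. -/
theorem stmt15 (d : ℕ) (hd : 0 < d)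
    (N : (Fin d → ℝ) → ℝ)
    (hN0 : ∀ x, N x = 0 ↔ x = 0)
    (hNsmul : ∀ (c : ℝ) (x), N (c • x) = |c| * N x)
    (hNadd : ∀ x y, N (x + y) ≤ N x + N y)
    (α : ℝ) (hα : 0 < α) (hα1 : α ≤ 1)
    (M : ℕ) (hM : 0 < M)
    (xs : Fin M → (Fin d → ℝ)) (hxs : ∀ m, N (xs m) ≤ 1) :
    ((d : ℝ) / ((d : ℝ) + α)) * (M : ℝ) ^ (-(α / (d : ℝ))) ≤
      ∫ x, (⨅ m : Fin M, N (x - xs m) ^ α)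
        ∂((volume {x : Fin d → ℝ | N x ≤ 1})⁻¹ •
          volume.restrict {x : Fin d → ℝ | N x ≤ 1}) := by
  have : Nonempty (Fin d) := ⟨0, hd⟩
  have h := stmt15_general volume (.of N hNadd hNsmul) (fun x ↦ (hN0 x).1) hα hM xs
  rwa [finrank_fin_fun] at h
end

section
/- Equip ℝ^d with the ℓ∞-norm, so X = [−1,1]^d, let μ be Lebesgue measure on X normalized so μ(X) = 1, let α ∈ (0,1], let ε ≥ 0 be a common accuracy, and let p ∈ [1,∞). Then for any datasites x⁽¹⁾,…,x⁽ᴹ⁾ ∈ X, ∫_X ( ε + min_{1≤m≤M} ‖x − x⁽ᵐ⁾‖_∞^α )^p dμ(x) ≥ (ε + M^{−α/d})^p − M ∫_{ε^p}^{(ε + M^{−α/d})^p} (t^{1/p} − ε)^{d/α} dt. -/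
open MeasureTheory

/-
Truncating at a level `T`, the layer cake formula bounds `∫ f` from below by `T` minus the integral
up to `T` of the measures of the sublevel sets of `f`. The sublevel set of `u_{0,ε}` at level
`s ≥ ε` is a union of `M` balls of radius `(s - ε) ^ α⁻¹`, so its normalized measure is at most
`M * (s - ε) ^ (d / α)`. Every truncation level of the form `(ε + R) ^ p`, `R ≥ 0`, is admissible;
`R = M ^ (-α / d)` is the best one, since there the bound on the measure reaches `1`.
-/

section LayerCake

variable {Ω : Type*} [MeasurableSpace Ω] {μ : Measure Ω} {f : Ω → ℝ} {a T : ℝ}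

theorem integral_max_sub_zero_eq_intervalIntegral [IsFiniteMeasure μ] (hf : Integrable f μ)
    (haT : a ≤ T) (haf : ∀ᵐ x ∂μ, a ≤ f x) :
    ∫ x, max (T - f x) 0 ∂μ = ∫ t in a..T, μ.real {x | f x ≤ t} := by
  have integrable_posPart : Integrable (fun x => max (T - f x) 0) μ :=
    ((integrable_const T).sub hf).pos_part
  have posPart_le : ∀ᵐ x ∂μ, max (T - f x) 0 ≤ T - a := by
    filter_upwards [haf] with x hx
    exact max_le (sub_le_sub_left hx T) (sub_nonneg.2 haT)
  calc
    ∫ x, max (T - f x) 0 ∂μ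
        = ∫ s in Set.Ioc 0 (T - a), μ.real {x | s ≤ max (T - f x) 0} :=
      integrable_posPart.integral_eq_integral_Ioc_meas_le
        (.of_forall fun _ => le_max_right _ _) posPart_le
    _ = ∫ s in Set.Ioc 0 (T - a), μ.real {x | f x ≤ T - s} := by
      refine setIntegral_congr_fun measurableSet_Ioc fun s hs => ?_
      simp only [le_max_iff, hs.1.not_ge, or_false, le_sub_comm]
    _ = ∫ s in (0 : ℝ)..(T - a), μ.real {x | f x ≤ T - s} :=
      (intervalIntegral.integral_of_le (sub_nonneg.2 haT)).symm
    _ = ∫ t in a..T, μ.real {x | f x ≤ t} := by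
      rw [intervalIntegral.integral_comp_sub_left (fun t => μ.real {x | f x ≤ t}),
        sub_sub_cancel, sub_zero]

theorem sub_intervalIntegral_le_integral [IsProbabilityMeasure μ] (hf : Integrable f μ)
    (haT : a ≤ T) (haf : ∀ᵐ x ∂μ, a ≤ f x) {k : ℝ → ℝ} (hk : IntervalIntegrable k volume a T)
    (hfk : ∀ t ∈ Set.Icc a T, μ.real {x | f x ≤ t} ≤ k t) :
    T - ∫ t in a..T, k t ≤ ∫ x, f x ∂μ := by
  have integrable_sub : Integrable (fun x => T - f x) μ := (integrable_const T).sub hf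
  have monotone_measureReal : Monotone fun t => μ.real {x | f x ≤ t} :=
    fun _ _ hst => measureReal_mono fun _ hx => le_trans hx hst
  have : T - ∫ x, f x ∂μ ≤ ∫ t in a..T, k t :=
    calc
      T - ∫ x, f x ∂μ = ∫ x, (T - f x) ∂μ := by
        simp [integral_sub (integrable_const T) hf]
      _ ≤ ∫ x, max (T - f x) 0 ∂μ :=
        integral_mono integrable_sub integrable_sub.pos_part fun _ => le_max_left _ _
      _ = ∫ t in a..T, μ.real {x | f x ≤ t} :=
        integral_max_sub_zero_eq_intervalIntegral hf haT haf
      _ ≤ ∫ t in a..T, k t :=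
        intervalIntegral.integral_mono_on haT monotone_measureReal.intervalIntegrable hk hfk
  linarith

end LayerCake

section SiteEnvelope

variable {E ι : Type*} [PseudoMetricSpace E]

/-- The function `u_{0,ε}` of the datasites `c`. For `α ≤ 1` it is the largest function which is
`α`-Hölder with constant `1` and at most `ε` at every site, that is, the pointwise worst-case error
of recovering such a function from data of accuracy `ε`. Without sites the infimum is `0`. -/
noncomputable def siteEnvelope (ε α : ℝ) (c : ι → E) (x : E) : ℝ :=
  ε + ⨅ i, dist x (c i) ^ α

variable {ε α : ℝ} (c : ι → E)

theorem le_siteEnvelope (x : E) : ε ≤ siteEnvelope ε α c x :=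
  le_add_of_nonneg_right (Real.iInf_nonneg fun _ => Real.rpow_nonneg dist_nonneg α)

variable [Nonempty ι]

theorem continuous_siteEnvelope [Finite ι] (hα : 0 ≤ α) : Continuous (siteEnvelope ε α c) := by
  have continuous_inf : Continuous fun x => ⨅ i, dist x (c i) ^ α := by
    cases nonempty_fintype ι
    simp only [← Finset.inf'_univ_eq_ciInf]
    exact .finset_inf'_apply Finset.univ_nonempty fun i _ =>
      (continuous_id.dist continuous_const).rpow_const fun _ => .inr hα
  exact continuous_const.add continuous_inf

theorem setOf_siteEnvelope_le [Finite ι] (hα : 0 < α) {s : ℝ} (hs : ε ≤ s) :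
    {x | siteEnvelope ε α c x ≤ s} = ⋃ i, Metric.closedBall (c i) ((s - ε) ^ α⁻¹) := by
  ext x
  have iInf_le_iff : ⨅ i, dist x (c i) ^ α ≤ s - ε ↔ ∃ i, dist x (c i) ^ α ≤ s - ε := by
    cases nonempty_fintype ι
    rw [← Finset.inf'_univ_eq_ciInf]
    simp only [Finset.inf'_le_iff, Finset.mem_univ, true_and]
  simp only [siteEnvelope, Set.mem_ofPred_eq, Set.mem_iUnion, Metric.mem_closedBall,
    Real.le_rpow_inv_iff_of_pos dist_nonneg (sub_nonneg.2 hs) hα]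
  rw [← iInf_le_iff, le_sub_iff_add_le']

variable [Fintype ι] [MeasurableSpace E] {μ : Measure E} {n : ℝ}

theorem measureReal_setOf_siteEnvelope_le_le (hα : 0 < α)
    (hμ : ∀ x r, 0 ≤ r → μ.real (Metric.closedBall x r) ≤ r ^ n) {s : ℝ} (hs : ε ≤ s) :
    μ.real {x | siteEnvelope ε α c x ≤ s} ≤ Fintype.card ι * (s - ε) ^ (n / α) := by
  have hsε : 0 ≤ s - ε := sub_nonneg.2 hs
  calc
    μ.real {x | siteEnvelope ε α c x ≤ s}
        = μ.real (⋃ i, Metric.closedBall (c i) ((s - ε) ^ α⁻¹)) := by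
      rw [setOf_siteEnvelope_le c hα hs]
    _ ≤ ∑ i, μ.real (Metric.closedBall (c i) ((s - ε) ^ α⁻¹)) := measureReal_iUnion_fintype_le _
    _ ≤ ∑ _i : ι, ((s - ε) ^ α⁻¹) ^ n :=
      Finset.sum_le_sum fun i _ => hμ (c i) _ (Real.rpow_nonneg hsε _)
    _ = Fintype.card ι * (s - ε) ^ (n / α) := by
      rw [Finset.sum_const, Finset.card_univ, nsmul_eq_mul, ← Real.rpow_mul hsε, inv_mul_eq_div]

theorem sub_intervalIntegral_le_integral_siteEnvelope_rpow [IsProbabilityMeasure μ]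
    (hα : 0 < α) (hε : 0 ≤ ε) {p R : ℝ} (hp : 0 < p) (hR : 0 ≤ R) (hn : 0 ≤ n)
    (hμ : ∀ x r, 0 ≤ r → μ.real (Metric.closedBall x r) ≤ r ^ n)
    (integrable_rpow : Integrable (fun x => siteEnvelope ε α c x ^ p) μ) :
    (ε + R) ^ p - Fintype.card ι * ∫ t in (ε ^ p)..((ε + R) ^ p), (t ^ p⁻¹ - ε) ^ (n / α) ≤
      ∫ x, siteEnvelope ε α c x ^ p ∂μ := by
  have continuous_bound : Continuous fun t : ℝ => Fintype.card ι * (t ^ p⁻¹ - ε) ^ (n / α) :=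
    continuous_const.mul <| .rpow_const
      ((Real.continuous_rpow_const (inv_nonneg.2 hp.le)).sub continuous_const)
      fun _ => .inr (div_nonneg hn hα.le)
  rw [← intervalIntegral.integral_const_mul]
  refine sub_intervalIntegral_le_integral integrable_rpow
    (Real.rpow_le_rpow hε (le_add_of_nonneg_right hR) hp.le)
    (.of_forall fun x => Real.rpow_le_rpow hε (le_siteEnvelope c x) hp.le)
    (continuous_bound.intervalIntegrable _ _) fun t ht => ?_
  have t_nonneg : 0 ≤ t := (Real.rpow_nonneg hε p).trans ht.1
  have le_root : ε ≤ t ^ p⁻¹ := (Real.le_rpow_inv_iff_of_pos hε t_nonneg hp).2 ht.1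
  have sublevel_eq : {x | siteEnvelope ε α c x ^ p ≤ t} = {x | siteEnvelope ε α c x ≤ t ^ p⁻¹} :=
    Set.ext fun x => (Real.le_rpow_inv_iff_of_pos (hε.trans (le_siteEnvelope c x)) t_nonneg hp).symm
  rw [sublevel_eq]
  exact measureReal_setOf_siteEnvelope_le_le c hα hμ le_root

end SiteEnvelope

section UnitBall

open scoped ProbabilityTheory

variable {E : Type*} [NormedAddCommGroup E] [NormedSpace ℝ E] [FiniteDimensional ℝ E]
  [MeasurableSpace E] [BorelSpace E] (ν : Measure E) [ν.IsAddHaarMeasure]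

theorem cond_unitClosedBall_real_closedBall_le (x : E) {r : ℝ} (hr : 0 ≤ r) :
    ν[|Metric.closedBall 0 1].real (Metric.closedBall x r) ≤ r ^ Module.finrank ℝ E := by
  have unitBall_pos : 0 < ν.real (Metric.closedBall 0 1) :=
    ENNReal.toReal_pos (Metric.measure_closedBall_pos ν 0 one_pos).ne' measure_closedBall_lt_top.ne
  calc
    ν[|Metric.closedBall 0 1].real (Metric.closedBall x r)
        = (ν.real (Metric.closedBall 0 1))⁻¹ *
          ν.real (Metric.closedBall 0 1 ∩ Metric.closedBall x r) := by
      simp only [measureReal_def, ProbabilityTheory.cond_apply measurableSet_closedBall,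
        ENNReal.toReal_mul, ENNReal.toReal_inv]
    _ ≤ (ν.real (Metric.closedBall 0 1))⁻¹ * ν.real (Metric.closedBall x r) := by
      gcongr
      exacts [measure_closedBall_lt_top.ne, Set.inter_subset_right]
    _ = r ^ Module.finrank ℝ E := by
      rw [Measure.addHaar_real_closedBall' ν x hr]
      field_simp

theorem integrable_cond_unitClosedBall_of_continuous {f : E → ℝ} (hf : Continuous f) :
    Integrable f ν[|Metric.closedBall 0 1] :=
  (hf.continuousOn.integrableOn_compact (isCompact_closedBall 0 1)).smul_measure
    (ENNReal.inv_ne_top.2 (Metric.measure_closedBall_pos ν 0 one_pos).ne')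

theorem stmt17_general {ι : Type*} [Fintype ι] [Nonempty ι] (c : ι → E) {α ε p R : ℝ}
    (hα : 0 < α) (hε : 0 ≤ ε) (hp : 0 < p) (hR : 0 ≤ R) :
    (ε + R) ^ p - Fintype.card ι *
        ∫ t in (ε ^ p)..((ε + R) ^ p), (t ^ p⁻¹ - ε) ^ (Module.finrank ℝ E / α) ≤
      ∫ x, siteEnvelope ε α c x ^ p ∂ν[|Metric.closedBall 0 1] := by
  have : IsProbabilityMeasure ν[|Metric.closedBall 0 1] :=
    ProbabilityTheory.cond_isProbabilityMeasure_of_finite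
      (Metric.measure_closedBall_pos ν 0 one_pos).ne' measure_closedBall_lt_top.ne
  refine sub_intervalIntegral_le_integral_siteEnvelope_rpow c hα hε hp hR (Nat.cast_nonneg _) ?_ ?_
  · intro x r hr
    simpa only [Real.rpow_natCast] using cond_unitClosedBall_real_closedBall_le ν x hr
  · exact integrable_cond_unitClosedBall_of_continuous ν
      ((continuous_siteEnvelope c hα.le).rpow_const fun _ => .inr hp.le)

end UnitBall

theorem closedBall_zero_eq_Icc_pi {ι : Type*} [Fintype ι] {r : ℝ} (hr : 0 ≤ r) :
    Metric.closedBall (0 : ι → ℝ) r = Set.Icc (fun _ => -r) (fun _ => r) := by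
  rw [closedBall_pi _ hr, ← Set.pi_univ_Icc]
  simp only [Pi.zero_apply, Real.closedBall_zero_eq_Icc]

/-- For `X = [-1,1]^d` (unit ball of the `ℓ∞`-norm on `ℝ^d`) with normalized
Lebesgue measure, common accuracy `ε ≥ 0` and `p ∈ [1,∞)`, for any datasites in `X`,
`∫_X (ε + min_m ‖x - x⁽ᵐ⁾‖_∞^α)^p dμ ≥ (ε + M^(-α/d))^p
  - M ∫_{ε^p}^{(ε + M^(-α/d))^p} (t^(1/p) - ε)^(d/α) dt`. -/
theorem stmt17 (d : ℕ) (hd : 0 < d)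
    (α : ℝ) (hα : 0 < α) (hα1 : α ≤ 1)
    (ε : ℝ) (hε : 0 ≤ ε) (p : ℝ) (hp : 1 ≤ p)
    (M : ℕ) (hM : 0 < M)
    (xs : Fin M → (Fin d → ℝ))
    (hxs : ∀ m, xs m ∈ Set.Icc (fun _ => (-1 : ℝ)) (fun _ => (1 : ℝ))) :
    (ε + (M : ℝ) ^ (-(α / (d : ℝ)))) ^ p -
        (M : ℝ) * ∫ t in (ε ^ p)..((ε + (M : ℝ) ^ (-(α / (d : ℝ)))) ^ p),
          (t ^ (1 / p) - ε) ^ ((d : ℝ) / α) ≤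
      ∫ x, (ε + ⨅ m : Fin M, ‖x - xs m‖ ^ α) ^ p
        ∂((volume (Set.Icc (fun _ => (-1 : ℝ)) (fun _ => (1 : ℝ)) : Set (Fin d → ℝ)))⁻¹ •
          volume.restrict (Set.Icc (fun _ => (-1 : ℝ)) (fun _ => (1 : ℝ)))) := by
  have : Nonempty (Fin M) := ⟨⟨0, hM⟩⟩
  simpa only [ProbabilityTheory.cond, closedBall_zero_eq_Icc_pi zero_le_one, siteEnvelope,
    dist_eq_norm, inv_eq_one_div, Fintype.card_fin, Module.finrank_fin_fun] using
    stmt17_general volume xs hα hε (zero_lt_one.trans_le hp) (R := M ^ (-(α / d))) (by positivity)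
end

section
/- Equip ℝ^d with the ℓ∞-norm, so X = [−1,1]^d with normalized Lebesgue measure μ (μ(X) = 1), let α ∈ (0,1], ε ≥ 0, p ∈ [1,∞), and suppose M = N^d for an integer N ≥ 1. If x⁽¹⁾,…,x⁽ᴹ⁾ are the centers of the N^d congruent subcubes of side 2/N partitioning [−1,1]^d, then ∫_X ( ε + min_{1≤m≤M} ‖x − x⁽ᵐ⁾‖_∞^α )^p dμ(x) = (ε + M^{−α/d})^p − M ∫_{ε^p}^{(ε + M^{−α/d})^p} (t^{1/p} − ε)^{d/α} dt; in particular the lower bound over all datasites is attained. -/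
open MeasureTheory

/-!
A function `f` with values in `[a, b]` on a probability space has mean `b - ∫ₐᵇ ℙ(f < t) dt`.
For `f = (ε + D ^ α) ^ p`, where `D` is the distance to the datasites, the event `f < t` says
`D < r` with `r = (t ^ (1 / p) - ε) ^ (1 / α)`, i.e. it is the union of the balls of radius `r`
around the sites. For grid centers and `r ≤ 1 / N` these balls are disjoint and lie in the cube, so
the event has probability `N ^ d * r ^ d`; and `D ≤ 1 / N` on the cube.
-/

section LayerCake

variable {Ω : Type*} [MeasurableSpace Ω] {μ : Measure Ω} [IsProbabilityMeasure μ]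

theorem integral_eq_sub_integral_measureReal_lt {f : Ω → ℝ} {a b : ℝ} (hf : AEMeasurable f μ)
    (ha : ∀ᵐ x ∂μ, a ≤ f x) (hb : ∀ᵐ x ∂μ, f x ≤ b) :
    ∫ x, f x ∂μ = b - ∫ t in a..b, μ.real {x | f x < t} := by
  have hab : a ≤ b := (ha.and hb).exists.elim fun _ h ↦ h.1.trans h.2
  have hint : Integrable f μ := .of_mem_Icc a b hf (ha.and hb)
  have hcdf : IntervalIntegrable (fun t ↦ μ.real {x | f x < t}) volume a b :=
    Monotone.intervalIntegrable fun s t hst ↦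
      measureReal_mono fun x (hx : f x < s) ↦ hx.trans_le hst
  have hcompl (t : ℝ) : μ.real {x | t ≤ f x} = 1 - μ.real {x | f x < t} := by
    rw [← probReal_compl_eq_one_sub₀ (nullMeasurableSet_lt hf aemeasurable_const)]
    simp only [Set.compl_ofPred, not_lt]
  have hshift : ∫ x, (f x - a) ∂μ = ∫ t in a..b, (1 - μ.real {x | f x < t}) :=
    calc ∫ x, (f x - a) ∂μ
        = ∫ s in Set.Ioc 0 (b - a), μ.real {x | s ≤ f x - a} :=
          (hint.sub (integrable_const a)).integral_eq_integral_Ioc_meas_le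
            (ha.mono fun _ ↦ sub_nonneg.2) (hb.mono fun _ h ↦ sub_le_sub_right h a)
      _ = ∫ s in (0)..(b - a), μ.real {x | s + a ≤ f x} := by
          simp only [intervalIntegral.integral_of_le (sub_nonneg.2 hab), le_sub_iff_add_le]
      _ = ∫ t in a..b, μ.real {x | t ≤ f x} := by
          rw [intervalIntegral.integral_comp_add_right fun t ↦ μ.real {x | t ≤ f x}, zero_add,
            sub_add_cancel]
      _ = ∫ t in a..b, (1 - μ.real {x | f x < t}) := by simp only [hcompl]
  rw [integral_sub hint (integrable_const a),
    intervalIntegral.integral_sub intervalIntegrable_const hcdf] at hshift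
  simp only [integral_const, probReal_univ, intervalIntegral.integral_const,
    smul_eq_mul, mul_one] at hshift
  linarith

theorem add_rpow_rpow_lt_iff {D ε α p t : ℝ} (hD : 0 ≤ D) (hε : 0 ≤ ε) (hα : 0 < α) (hp : 0 < p)
    (ht : ε ^ p ≤ t) : (ε + D ^ α) ^ p < t ↔ D < (t ^ p⁻¹ - ε) ^ α⁻¹ := by
  have ht₀ : 0 ≤ t := (Real.rpow_nonneg hε p).trans ht
  have hs : 0 ≤ t ^ p⁻¹ - ε := sub_nonneg.2 ((Real.le_rpow_inv_iff_of_pos hε ht₀ hp).2 ht)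
  rw [← Real.lt_rpow_inv_iff_of_pos (by positivity) ht₀ hp, ← lt_sub_iff_add_lt',
    Real.lt_rpow_inv_iff_of_pos hD hs hα]

theorem integral_add_rpow_rpow_of_measureReal_lt {D : Ω → ℝ} {R c q ε α p : ℝ}
    (hD : AEMeasurable D μ) (hD₀ : ∀ᵐ x ∂μ, 0 ≤ D x) (hDR : ∀ᵐ x ∂μ, D x ≤ R)
    (hlt : ∀ r, 0 < r → r < R → μ.real {x | D x < r} = c * r ^ q)
    (hε : 0 ≤ ε) (hα : 0 < α) (hp : 0 < p) :
    ∫ x, (ε + D x ^ α) ^ p ∂μ =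
      (ε + R ^ α) ^ p - c * ∫ t in (ε ^ p)..((ε + R ^ α) ^ p), (t ^ p⁻¹ - ε) ^ (q / α) := by
  have hR : 0 ≤ R := (hD₀.and hDR).exists.elim fun _ h ↦ h.1.trans h.2
  have hle : ε ^ p ≤ (ε + R ^ α) ^ p :=
    Real.rpow_le_rpow hε (le_add_of_nonneg_right (by positivity)) hp.le
  rw [integral_eq_sub_integral_measureReal_lt (a := ε ^ p) (b := (ε + R ^ α) ^ p) (by fun_prop)
    (hD₀.mono fun x hx ↦ by gcongr; exact le_add_of_nonneg_right (by positivity))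
    ((hD₀.and hDR).mono fun x hx ↦ by have := hx.1; gcongr; exact hx.2),
    ← intervalIntegral.integral_const_mul]
  congr 1
  refine intervalIntegral.integral_congr_uIoo fun t ht ↦ ?_
  rw [Set.uIoo_of_le hle] at ht
  have ht₀ : 0 ≤ t := (Real.rpow_nonneg hε p).trans ht.1.le
  have hs : 0 < t ^ p⁻¹ - ε := sub_pos.2 ((Real.lt_rpow_inv_iff_of_pos hε ht₀ hp).2 ht.1)
  have hsR : (t ^ p⁻¹ - ε) ^ α⁻¹ < R := by
    rw [Real.rpow_inv_lt_iff_of_pos hs.le hR hα, sub_lt_iff_lt_add',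
      Real.rpow_inv_lt_iff_of_pos ht₀ (by positivity) hp]
    exact ht.2
  calc μ.real {x | (ε + D x ^ α) ^ p < t}
      = μ.real {x | D x < (t ^ p⁻¹ - ε) ^ α⁻¹} :=
        measureReal_congr <| Filter.eventuallyEq_set.2 <| hD₀.mono fun x hx ↦
          add_rpow_rpow_lt_iff hx hε hα hp ht.1.le
    _ = c * ((t ^ p⁻¹ - ε) ^ α⁻¹) ^ q := hlt _ (by positivity) hsR
    _ = c * (t ^ p⁻¹ - ε) ^ (q / α) := by rw [← Real.rpow_mul hs.le, inv_mul_eq_div]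

end LayerCake

section Sites

variable {κ : Type*}

theorem iInf_rpow_of_nonneg {f : κ → ℝ} (hf : ∀ m, 0 ≤ f m) {α : ℝ} (hα : 0 < α) :
    ⨅ m, f m ^ α = (⨅ m, f m) ^ α := by
  rcases isEmpty_or_nonempty κ with _ | _
  · simp only [Real.iInf_of_isEmpty, Real.zero_rpow hα.ne']
  have hf' (m : κ) : 0 ≤ f m ^ α := Real.rpow_nonneg (hf m) α
  apply le_antisymm
  · rw [← Real.rpow_inv_le_iff_of_pos (Real.iInf_nonneg hf') (Real.iInf_nonneg hf) hα]
    refine le_ciInf fun m ↦ ?_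
    rw [Real.rpow_inv_le_iff_of_pos (Real.iInf_nonneg hf') (hf m) hα]
    exact ciInf_le ⟨0, Set.forall_mem_range.2 hf'⟩ m
  · exact le_ciInf fun m ↦ Real.rpow_le_rpow (Real.iInf_nonneg hf)
      (ciInf_le ⟨0, Set.forall_mem_range.2 hf⟩ m) hα.le

theorem iInf_norm_sub_rpow_eq_infDist_rpow {E : Type*} [SeminormedAddCommGroup E] (xs : κ → E)
    (x : E) {α : ℝ} (hα : 0 < α) :
    ⨅ m, ‖x - xs m‖ ^ α = Metric.infDist x (Set.range xs) ^ α := by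
  rw [iInf_rpow_of_nonneg (fun _ ↦ norm_nonneg _) hα, Metric.infDist_eq_iInf, iInf_range' (dist x)]
  simp only [dist_eq_norm]

theorem measureReal_thickening_range [Fintype κ] {X : Type*} [PseudoMetricSpace X]
    [MeasurableSpace X] [OpensMeasurableSpace X] (μ : Measure X) [IsFiniteMeasureOnCompacts μ]
    [ProperSpace X] {xs : κ → X} {r : ℝ}
    (hxs : Pairwise fun k l ↦ r + r ≤ dist (xs k) (xs l)) :
    μ.real (Metric.thickening r (Set.range xs)) = ∑ k, μ.real (Metric.ball (xs k) r) := by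
  rw [Metric.thickening_eq_biUnion_ball, Set.biUnion_range]
  exact measureReal_iUnion_fintype (fun k l hkl ↦ Metric.ball_disjoint_ball (hxs hkl))
    (fun k ↦ measurableSet_ball) fun k ↦ measure_ball_lt_top.ne

end Sites

section CellCenter

/-- The center of the `k`-th of the `N` congruent intervals, numbered from `0`, into which
`[-1, 1]` is divided. -/
noncomputable def cellCenter (N k : ℕ) : ℝ := (2 * k + 1) / N - 1

variable {N : ℕ}

theorem dist_cellCenter_le_iff (hN : 0 < N) {k : ℕ} {x : ℝ} :
    dist x (cellCenter N k) ≤ 1 / N ↔ k ≤ (x + 1) * N / 2 ∧ (x + 1) * N / 2 ≤ k + 1 := by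
  have hN' : (0 : ℝ) < N := Nat.cast_pos.2 hN
  have hsub : x - cellCenter N k = ((x + 1) * N - (2 * k + 1)) / N := by
    rw [cellCenter]; field_simp; ring
  rw [Real.dist_eq, hsub, abs_div, abs_of_pos hN', div_le_div_iff_of_pos_right hN', abs_le]
  constructor <;> rintro ⟨h₁, h₂⟩ <;> constructor <;> linarith

theorem exists_dist_cellCenter_le (hN : 0 < N) {x : ℝ} (hx : x ∈ Set.Icc (-1) 1) :
    ∃ k : Fin N, dist x (cellCenter N k) ≤ 1 / N := by
  have hN' : (0 : ℝ) < N := Nat.cast_pos.2 hN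
  simp only [dist_cellCenter_le_iff hN]
  obtain rfl | hx₁ := hx.2.eq_or_lt
  · refine ⟨⟨N - 1, by lia⟩, ?_⟩
    rw [Nat.cast_pred hN]
    constructor <;> linarith
  · have h₀ : 0 ≤ (x + 1) * N / 2 := by have := neg_le_iff_add_nonneg.1 hx.1; positivity
    have hlt : ⌊(x + 1) * N / 2⌋₊ < N := by rw [Nat.floor_lt h₀]; nlinarith
    exact ⟨⟨_, hlt⟩, Nat.floor_le h₀, (Nat.lt_floor_add_one _).le⟩

theorem mem_Icc_of_dist_cellCenter_le {k : Fin N} {x : ℝ} (h : dist x (cellCenter N k) ≤ 1 / N) :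
    x ∈ Set.Icc (-1) 1 := by
  have hN : 0 < N := k.pos
  have hN' : (0 : ℝ) < N := Nat.cast_pos.2 hN
  have hk : (k : ℝ) + 1 ≤ N := by exact_mod_cast k.is_lt
  obtain ⟨h₁, h₂⟩ := (dist_cellCenter_le_iff hN).1 h
  have hx₁ : 0 ≤ (x + 1) * N := by linarith [k.val.cast_nonneg (α := ℝ)]
  have hx₂ : (x + 1) * N ≤ 2 * N := by linarith
  constructor
  · linarith [nonneg_of_mul_nonneg_left hx₁ hN']
  · linarith [le_of_mul_le_mul_right hx₂ hN']

theorem two_div_le_dist_cellCenter {k l : ℕ} (h : k ≠ l) :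
    2 / N ≤ dist (cellCenter N k) (cellCenter N l) := by
  have hsub : cellCenter N k - cellCenter N l = 2 * ((k - l : ℤ) : ℝ) / N := by
    rw [cellCenter, cellCenter]; push_cast; ring
  have hkl : (1 : ℝ) ≤ |((k - l : ℤ) : ℝ)| := by
    exact_mod_cast Int.one_le_abs (sub_ne_zero.2 (Nat.cast_injective.ne h))
  rw [Real.dist_eq, hsub, abs_div, abs_mul, abs_two, Nat.abs_cast]
  gcongr
  linarith

end CellCenter

section Grid

open ProbabilityTheory

variable {ι : Type*} {N : ℕ}

/-- The center of the subcube with multi-index `k` in the partition of `[-1, 1]^ι` into congruent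
subcubes of side `2 / N`. -/
noncomputable def gridCenter (N : ℕ) (k : ι → Fin N) : ι → ℝ := fun i ↦ cellCenter N (k i)

variable [Fintype ι]

theorem infDist_range_gridCenter_le (hN : 0 < N) {x : ι → ℝ} (hx : x ∈ Set.Icc (-1) 1) :
    Metric.infDist x (Set.range (gridCenter N)) ≤ 1 / N := by
  choose k hk using fun i ↦ exists_dist_cellCenter_le hN ⟨hx.1 i, hx.2 i⟩
  exact (Metric.infDist_le_dist_of_mem (Set.mem_range_self k)).trans
    ((dist_pi_le_iff (by positivity)).2 hk)

theorem ball_gridCenter_subset_Icc {r : ℝ} (hr : r ≤ 1 / N) (k : ι → Fin N) :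
    Metric.ball (gridCenter N k) r ⊆ Set.Icc (-1) 1 := by
  intro x hx
  have hmem (i : ι) : x i ∈ Set.Icc (-1) 1 :=
    mem_Icc_of_dist_cellCenter_le <|
      (dist_le_pi_dist x (gridCenter N k) i).trans ((Metric.mem_ball.1 hx).le.trans hr)
  exact ⟨fun i ↦ (hmem i).1, fun i ↦ (hmem i).2⟩

theorem two_div_le_dist_gridCenter {k l : ι → Fin N} (h : k ≠ l) :
    2 / N ≤ dist (gridCenter N k) (gridCenter N l) := by
  obtain ⟨i, hi⟩ := Function.ne_iff.1 h
  exact (two_div_le_dist_cellCenter (Fin.val_injective.ne hi)).trans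
    (dist_le_pi_dist (gridCenter N k) (gridCenter N l) i)

theorem volume_Icc_neg_one_one : volume (Set.Icc (-1 : ι → ℝ) 1) = 2 ^ Fintype.card ι := by
  rw [Real.volume_Icc_pi]
  norm_num

instance isProbabilityMeasure_cond_Icc_neg_one_one :
    IsProbabilityMeasure volume[|Set.Icc (-1 : ι → ℝ) 1] :=
  cond_isProbabilityMeasure_of_finite
    (by simp [volume_Icc_neg_one_one]) (by simp [volume_Icc_neg_one_one])

theorem volume_real_thickening_range_gridCenter {r : ℝ} (hr₀ : 0 < r) (hr : r ≤ 1 / N) :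
    volume.real (Metric.thickening r (Set.range (gridCenter (ι := ι) N))) =
      N ^ Fintype.card ι * (2 * r) ^ Fintype.card ι := by
  classical
  have hsep : Pairwise fun k l : ι → Fin N ↦ r + r ≤ dist (gridCenter N k) (gridCenter N l) :=
    fun k l hkl ↦ (two_div_le_dist_gridCenter hkl).trans' <| by linarith [add_div 1 1 (N : ℝ)]
  rw [measureReal_thickening_range volume hsep]
  have hball (k : ι → Fin N) :
      volume.real (Metric.ball (gridCenter N k) r) = (2 * r) ^ Fintype.card ι := by
    rw [measureReal_def, Real.volume_pi_ball _ hr₀, ENNReal.toReal_ofReal (by positivity)]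
  simp only [hball, Finset.sum_const, Finset.card_univ, Fintype.card_fun, Fintype.card_fin,
    nsmul_eq_mul, Nat.cast_pow]

theorem cond_real_infDist_range_gridCenter_lt (hN : 0 < N) {r : ℝ} (hr₀ : 0 < r) (hr : r ≤ 1 / N) :
    volume[|Set.Icc (-1 : ι → ℝ) 1].real
      {x | Metric.infDist x (Set.range (gridCenter N)) < r} =
      N ^ Fintype.card ι * r ^ Fintype.card ι := by
  have : Nonempty (Fin N) := ⟨⟨0, hN⟩⟩
  have hthick : {x : ι → ℝ | Metric.infDist x (Set.range (gridCenter N)) < r} =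
      Metric.thickening r (Set.range (gridCenter N)) :=
    Set.ext fun x ↦ (Metric.mem_thickening_iff_infDist_lt (Set.range_nonempty _)).symm
  have hsub : Metric.thickening r (Set.range (gridCenter N)) ⊆ Set.Icc (-1 : ι → ℝ) 1 := by
    rw [Metric.thickening_eq_biUnion_ball, Set.biUnion_range]
    exact Set.iUnion_subset (ball_gridCenter_subset_Icc hr)
  rw [hthick, measureReal_def, cond_apply measurableSet_Icc,
    Set.inter_eq_right.2 hsub, volume_Icc_neg_one_one, ENNReal.toReal_mul, ← measureReal_def,
    volume_real_thickening_range_gridCenter hr₀ hr, mul_pow]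
  simp only [ENNReal.toReal_inv, ENNReal.toReal_pow, ENNReal.toReal_ofNat]
  field_simp

theorem integral_add_infDist_gridCenter_rpow_rpow (hN : 0 < N) {ε α p : ℝ} (hε : 0 ≤ ε)
    (hα : 0 < α) (hp : 0 < p) :
    ∫ x, (ε + Metric.infDist x (Set.range (gridCenter N)) ^ α) ^ p
        ∂volume[|Set.Icc (-1 : ι → ℝ) 1] =
      (ε + (1 / N) ^ α) ^ p - N ^ Fintype.card ι *
        ∫ t in (ε ^ p)..((ε + (1 / N) ^ α) ^ p), (t ^ p⁻¹ - ε) ^ (Fintype.card ι / α) := by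
  refine integral_add_rpow_rpow_of_measureReal_lt (by fun_prop)
    (.of_forall fun _ ↦ Metric.infDist_nonneg) ?_ (fun r hr₀ hr ↦ ?_) hε hα hp
  · filter_upwards [ae_cond_mem measurableSet_Icc] with x hx
    exact infDist_range_gridCenter_le hN hx
  · rw [cond_real_infDist_range_gridCenter_lt hN hr₀ hr.le, Real.rpow_natCast]

end Grid

theorem pow_rpow_neg_div {x : ℝ} (hx : 0 ≤ x) {n : ℕ} (hn : n ≠ 0) (a : ℝ) :
    (x ^ n) ^ (-(a / n)) = (1 / x) ^ a := by
  rw [← Real.rpow_natCast, ← Real.rpow_mul hx, mul_neg, mul_div_cancel₀ _ (Nat.cast_ne_zero.2 hn),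
    one_div, Real.inv_rpow hx, Real.rpow_neg hx]

theorem stmt18_general (d : ℕ) (hd : 0 < d) (α : ℝ) (hα : 0 < α) (ε : ℝ) (hε : 0 ≤ ε)
    (p : ℝ) (hp : 0 < p) (N : ℕ) (hN : 0 < N)
    (xs : Fin (N ^ d) → (Fin d → ℝ))
    (hxs : ∃ e : Fin (N ^ d) ≃ (Fin d → Fin N),
      ∀ m, xs m = fun i => (2 * ((e m i : ℕ) : ℝ) + 1) / (N : ℝ) - 1) :
    ∫ x, (ε + ⨅ m : Fin (N ^ d), ‖x - xs m‖ ^ α) ^ p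
        ∂((volume (Set.Icc (fun _ => (-1 : ℝ)) (fun _ => (1 : ℝ)) : Set (Fin d → ℝ)))⁻¹ •
          volume.restrict (Set.Icc (fun _ => (-1 : ℝ)) (fun _ => (1 : ℝ)))) =
      (ε + ((N ^ d : ℕ) : ℝ) ^ (-(α / (d : ℝ)))) ^ p -
        ((N ^ d : ℕ) : ℝ) *
          ∫ t in (ε ^ p)..((ε + ((N ^ d : ℕ) : ℝ) ^ (-(α / (d : ℝ)))) ^ p),
            (t ^ (1 / p) - ε) ^ ((d : ℝ) / α) := by
  obtain ⟨e, he⟩ := hxs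
  have hrange : Set.range xs = Set.range (gridCenter N) := by
    rw [show xs = gridCenter N ∘ e from funext he, e.surjective.range_comp]
  have hgrid := integral_add_infDist_gridCenter_rpow_rpow (ι := Fin d) hN hε hα hp
  rw [Fintype.card_fin] at hgrid
  simp only [iInf_norm_sub_rpow_eq_infDist_rpow xs _ hα, hrange, Nat.cast_pow,
    pow_rpow_neg_div N.cast_nonneg hd.ne', one_div p]
  exact hgrid

/-- For `X = [-1,1]^d` with the `ℓ∞`-norm and normalized Lebesgue measure, if
`M = N^d` and the datasites are the centers of the `N^d` congruent subcubes of side `2/N`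
partitioning `[-1,1]^d`, then the lower bound of Statement 17 is attained with equality. -/
theorem stmt18 (d : ℕ) (hd : 0 < d)
    (α : ℝ) (hα : 0 < α) (hα1 : α ≤ 1)
    (ε : ℝ) (hε : 0 ≤ ε) (p : ℝ) (hp : 1 ≤ p)
    (N : ℕ) (hN : 0 < N)
    (xs : Fin (N ^ d) → (Fin d → ℝ))
    (hxs : ∃ e : Fin (N ^ d) ≃ (Fin d → Fin N),
      ∀ m, xs m = fun i => (2 * ((e m i : ℕ) : ℝ) + 1) / (N : ℝ) - 1) :
    ∫ x, (ε + ⨅ m : Fin (N ^ d), ‖x - xs m‖ ^ α) ^ p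
        ∂((volume (Set.Icc (fun _ => (-1 : ℝ)) (fun _ => (1 : ℝ)) : Set (Fin d → ℝ)))⁻¹ •
          volume.restrict (Set.Icc (fun _ => (-1 : ℝ)) (fun _ => (1 : ℝ)))) =
      (ε + ((N ^ d : ℕ) : ℝ) ^ (-(α / (d : ℝ)))) ^ p -
        ((N ^ d : ℕ) : ℝ) *
          ∫ t in (ε ^ p)..((ε + ((N ^ d : ℕ) : ℝ) ^ (-(α / (d : ℝ)))) ^ p),
            (t ^ (1 / p) - ε) ^ ((d : ℝ) / α) :=
  stmt18_general d hd α hα ε hε p (one_pos.trans_le hp) N hN xs hxs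
end
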